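/- Let U and V be real Banach spaces, let A : U → (V →L[ℝ] ℝ) and J : U → ℝ be three times continuously Fréchet differentiable, and let U₂ ⊆ U and V₂ ⊆ V be closed subspaces. Suppose u₂ ∈ U₂ satisfies A(u₂)(v) = 0 for all v ∈ V₂, and z₂ ∈ V₂ satisfies A'(u₂)(φ)(z₂) = J'(u₂)(φ) for all φ ∈ U₂. Then for every ũ ∈ U₂ and z̃ ∈ V₂, with e := u₂ − ũ and e* := z₂ − z̃, one has J(u₂) − J(ũ) = (1/2)·ρ(ũ)(z₂ − z̃) + (1/2)·ρ*(ũ, z̃)(u₂ − ũ) + ρ(ũ)(z̃) + 𝓡^{(3)(2)}, where ρ(ũ)(φ) := −A(ũ)(φ), ρ*(ũ, z̃)(ψ) := J'(ũ)(ψ) − A'(ũ)(ψ)(z̃), and 𝓡^{(3)(2)} := (1/2)·∫₀¹ [ J'''(ũ + s e)(e,e,e) − A'''(ũ + s e)(e,e,e)(z̃ + s e*) − 3·A''(ũ + s e)(e,e)(e*) ] · s·(s − 1) ds. -/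

import Mathlib

open intervalIntegral

/-!
Restrict the Lagrangian `J u - A u z` to the segment from `(ut, zt)` to `(u2, z2)`:
`L s = J (ut + s • e) - A (ut + s • e) (zt + s • d)` with `e = u2 - ut`, `d = z2 - zt`.
The error representation is the trapezoidal rule with integral remainder,
`L 1 - L 0 = (L₁ 0 + L₁ 1) / 2 + (1/2) ∫₀¹ L₃ s * (s * (s - 1)) ds`, with `Lₙ` the `n`-th
derivative of `L`; here `L₁ 1 = 0` because `(u2, z2)` is stationary in the directions
`e ∈ U2`, `d ∈ V2`.
The derivatives of `L` come from `hasDerivAt_iteratedFDeriv_line` and the product rule for the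
evaluation pairing; as the second argument is affine in `s`, the third derivative is
`D³J(e,e,e) - D³A(e,e,e)(zt + s • d) - 3 D²A(e,e)(d)`, evaluated at `ut + s • e`.
-/

/-- Along the line `s ↦ x + s • e`, the `n`-th directional derivative in direction `e`
differentiates to the next one. -/
lemma hasDerivAt_iteratedFDeriv_line {U F : Type*} [NormedAddCommGroup U] [NormedSpace ℝ U]
    [NormedAddCommGroup F] [NormedSpace ℝ F] {f : U → F} {N : ℕ} (hf : ContDiff ℝ N f)
    {n : ℕ} (hn : n < N) (x e : U) (s : ℝ) :
    HasDerivAt (fun t : ℝ => iteratedFDeriv ℝ n f (x + t • e) (fun _ => e))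
      (iteratedFDeriv ℝ (n + 1) f (x + s • e) (fun _ => e)) s := by
  have h1 : HasFDerivAt (iteratedFDeriv ℝ n f) (fderiv ℝ (iteratedFDeriv ℝ n f) (x + s • e))
      (x + s • e) :=
    ((hf.differentiable_iteratedFDeriv (by exact_mod_cast hn)) _).hasFDerivAt
  have h2 : HasDerivAt (fun t : ℝ => x + t • e) e s := by
    simpa using ((hasDerivAt_id s).smul_const e).const_add x
  have h3 := h1.comp_hasDerivAt s h2
  have h4 := (ContinuousMultilinearMap.apply ℝ (fun _ : Fin n => U) F
    (fun _ => e)).hasFDerivAt.comp_hasDerivAt s h3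
  rw [iteratedFDeriv_succ_apply_left]
  exact h4

/-- Trapezoidal rule with integral remainder. The antiderivative of the remainder is
`L2 s * (s * (s - 1)) - L1 s * (2 * s - 1) + 2 * L s`. -/
lemma trapezoid_remainder {L L1 L2 L3 : ℝ → ℝ} (h0 : ∀ s, HasDerivAt L (L1 s) s)
    (h1 : ∀ s, HasDerivAt L1 (L2 s) s) (h2 : ∀ s, HasDerivAt L2 (L3 s) s)
    (h3 : Continuous L3) :
    L 1 - L 0 = (1/2) * (L1 0 + L1 1) + (1/2) * ∫ s in (0:ℝ)..1, L3 s * (s * (s - 1)) := by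
  have key : ∫ s in (0:ℝ)..1, L3 s * (s * (s - 1)) = _ :=
    integral_eq_sub_of_hasDerivAt
      (f := fun s => L2 s * (s * (s - 1)) - L1 s * (2 * s - 1) + 2 * L s)
      (fun s _ => by
        have hq : HasDerivAt (fun s : ℝ => s * (s - 1)) (1 * (s - 1) + s * 1) s :=
          (hasDerivAt_id s).mul ((hasDerivAt_id s).sub_const 1)
        have hl : HasDerivAt (fun s : ℝ => 2 * s - 1) (2 * 1) s :=
          ((hasDerivAt_id s).const_mul 2).sub_const 1
        have := (((h2 s).mul hq).sub ((h1 s).mul hl)).add ((h0 s).const_mul 2)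
        refine this.congr_deriv ?_
        ring)
      ((by fun_prop : Continuous fun s : ℝ => L3 s * (s * (s - 1))).intervalIntegrable _ _)
  rw [key]
  ring

/-- Discrete DWR error representation in enriched subspaces (Corollary 2 of the paper). -/
theorem dwr_discrete_error_representation
    {U V : Type*} [NormedAddCommGroup U] [NormedSpace ℝ U] [CompleteSpace U]
    [NormedAddCommGroup V] [NormedSpace ℝ V] [CompleteSpace V]
    (A : U → (V →L[ℝ] ℝ)) (J : U → ℝ)
    (hA : ContDiff ℝ 3 A) (hJ : ContDiff ℝ 3 J)
    (U2 : Submodule ℝ U) (V2 : Submodule ℝ V)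
    (hU2 : IsClosed (U2 : Set U)) (hV2 : IsClosed (V2 : Set V))
    (u2 : U) (hu2mem : u2 ∈ U2) (hu2 : ∀ v ∈ V2, A u2 v = 0)
    (z2 : V) (hz2mem : z2 ∈ V2)
    (hz2 : ∀ φ ∈ U2, fderiv ℝ A u2 φ z2 = fderiv ℝ J u2 φ)
    (ut : U) (hut : ut ∈ U2) (zt : V) (hzt : zt ∈ V2) :
    J u2 - J ut =
      (1/2) * (-(A ut (z2 - zt)))
      + (1/2) * (fderiv ℝ J ut (u2 - ut) - fderiv ℝ A ut (u2 - ut) zt)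
      + (-(A ut zt))
      + (1/2) * ∫ s in (0:ℝ)..1,
          (iteratedFDeriv ℝ 3 J (ut + s • (u2 - ut)) ![u2 - ut, u2 - ut, u2 - ut]
            - iteratedFDeriv ℝ 3 A (ut + s • (u2 - ut)) ![u2 - ut, u2 - ut, u2 - ut]
                (zt + s • (z2 - zt))
            - 3 * iteratedFDeriv ℝ 2 A (ut + s • (u2 - ut)) ![u2 - ut, u2 - ut]
                (z2 - zt))
          * (s * (s - 1)) := by
  set e := u2 - ut with he
  set d := z2 - zt with hd
  let j : ℕ → ℝ → ℝ := fun n s => iteratedFDeriv ℝ n J (ut + s • e) (fun _ => e)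
  let a : ℕ → ℝ → (V →L[ℝ] ℝ) := fun n s => iteratedFDeriv ℝ n A (ut + s • e) (fun _ => e)
  have hj : ∀ n < 3, ∀ s, HasDerivAt (j n) (j (n + 1) s) s := fun n hn s =>
    hasDerivAt_iteratedFDeriv_line (N := 3) hJ hn ut e s
  have ha : ∀ n < 3, ∀ s, HasDerivAt (a n) (a (n + 1) s) s := fun n hn s =>
    hasDerivAt_iteratedFDeriv_line (N := 3) hA hn ut e s
  have hz : ∀ s : ℝ, HasDerivAt (fun t : ℝ => zt + t • d) d s := fun s => by
    simpa using ((hasDerivAt_id s).smul_const d).const_add zt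
  have haz : ∀ n < 3, ∀ s, HasDerivAt (fun t => a n t (zt + t • d))
      (a (n + 1) s (zt + s • d) + a n s d) s := fun n hn s =>
    (ha n hn s).clm_apply (hz s)
  have had : ∀ n < 3, ∀ s, HasDerivAt (fun t => a n t d) (a (n + 1) s d) s := fun n hn s => by
    simpa using (ha n hn s).clm_apply (hasDerivAt_const s d)
  have hline : Continuous fun s : ℝ => ut + s • e := by fun_prop
  have hj3 : Continuous (j 3) :=
    (ContinuousMultilinearMap.apply ℝ (fun _ : Fin 3 => U) ℝ (fun _ => e)).continuous.comp
      ((hJ.continuous_iteratedFDeriv le_rfl).comp hline)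
  have ha3 : Continuous (a 3) :=
    (ContinuousMultilinearMap.apply ℝ (fun _ : Fin 3 => U) (V →L[ℝ] ℝ)
      (fun _ => e)).continuous.comp ((hA.continuous_iteratedFDeriv le_rfl).comp hline)
  have ha2 : Continuous (a 2) :=
    continuous_iff_continuousAt.2 fun s => (ha 2 (by norm_num) s).continuousAt
  have main := trapezoid_remainder
    (L := fun s => j 0 s - a 0 s (zt + s • d))
    (L1 := fun s => j 1 s - a 1 s (zt + s • d) - a 0 s d)
    (L2 := fun s => j 2 s - a 2 s (zt + s • d) - 2 * a 1 s d)
    (L3 := fun s => j 3 s - a 3 s (zt + s • d) - 3 * a 2 s d)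
    (fun s => ((hj 0 (by norm_num) s).sub (haz 0 (by norm_num) s)).congr_deriv (by ring))
    (fun s => (((hj 1 (by norm_num) s).sub (haz 1 (by norm_num) s)).sub
      (had 0 (by norm_num) s)).congr_deriv (by ring))
    (fun s => (((hj 2 (by norm_num) s).sub (haz 2 (by norm_num) s)).sub
      ((had 1 (by norm_num) s).const_mul 2)).congr_deriv (by ring))
    (by fun_prop)
  have v3 : (![e, e, e] : Fin 3 → U) = fun _ => e := by ext i; fin_cases i <;> rfl
  have v2 : (![e, e] : Fin 2 → U) = fun _ => e := by ext i; fin_cases i <;> rfl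
  rw [v3, v2]
  have hu : ut + e = u2 := by simp [he]
  have hzz : zt + d = z2 := by simp [hd]
  -- Stationarity of the Lagrangian at `(u2, z2)` makes its derivative vanish at `s = 1`.
  have e1 := hz2 e (U2.sub_mem hu2mem hut)
  have e2 := hu2 d (V2.sub_mem hz2mem hzt)
  have e3 := hu2 z2 hz2mem
  simp only [j, a, iteratedFDeriv_zero_apply, iteratedFDeriv_one_apply, one_smul, zero_smul,
    add_zero, hu, hzz, e1, e2, e3] at main
  linarith
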